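/- arXiv:math/0610093 — 4 statements merged into one kernel-verified Lean document; each statement's English description precedes it below -/
import Mathlib

section
/- Let p be a prime, K an algebraically closed field of characteristic p, and n ≥ 1. Then the additive group endomorphism P = F − id of W_n(K), sending (a_1,…,a_n) to (a_1^p,…,a_n^p) − (a_1,…,a_n) (subtraction taken in the Witt ring), is surjective: for every a ∈ W_n(K) there exists r ∈ W_n(K) with F(r) − r = a. -/
/-- The Frobenius `F : W_n(R) → W_n(R)` sending `(a_1,…,a_n)` to `(a_1^p,…,a_n^p)`. -/
def TruncatedWittVector.tfrob (p n : ℕ) (R : Type*) [CommRing R]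
    (x : TruncatedWittVector p n R) : TruncatedWittVector p n R :=
  TruncatedWittVector.mk p fun i => (x.coeff i) ^ p

/-!
Work in the full ring `W(R)`, where `P = F - id` commutes with the Verschiebung `V`. If
`t ↦ t ^ p - t` is surjective on `R`, then every Witt vector is the image under `P` of a Teichmüller
representative plus an element of `V W(R)`. Applying this again to the remainder, and moving `V`
past `P`, pushes the error into `V^n W(R)`, which truncation to length `n` kills.
-/

theorem exists_map_add_iterate_eq {A : Type*} [AddMonoid A] {P V : A →+ A}
    (comm : Function.Commute P V) (h : ∀ c, ∃ x d, P x + V d = c) (n : ℕ) (a : A) :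
    ∃ x d, P x + V^[n] d = a := by
  induction n with
  | zero => exact ⟨0, a, by rw [map_zero, Function.iterate_zero_apply, zero_add]⟩
  | succ n ih =>
    obtain ⟨x, c, rfl⟩ := ih
    obtain ⟨y, d, rfl⟩ := h c
    refine ⟨x + V^[n] y, d, ?_⟩
    rw [map_add, (comm.iterate_right n).eq, Function.iterate_succ_apply, iterate_map_add, add_assoc]

theorem exists_pow_sub_self_eq_of_isSepClosed {K : Type*} [Field K] [IsSepClosed K] {q : ℕ}
    (hq : (q : K) = 0) (hq' : 2 ≤ q) (c : K) : ∃ t : K, t ^ q - t = c := by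
  obtain ⟨t, ht⟩ := IsSepClosed.exists_root_C_mul_X_pow_add_C_mul_X_add_C
    1 (-1) (-c) hq hq' (neg_ne_zero.mpr one_ne_zero)
  exact ⟨t, by linear_combination ht⟩

section

variable {p : ℕ} [Fact p.Prime] {R : Type*} [CommRing R]

theorem wittVector_sub_coeff_zero (x y : WittVector p R) :
    (x - y).coeff 0 = x.coeff 0 - y.coeff 0 :=
  map_sub (WittVector.constantCoeff : WittVector p R →+* R) x y

theorem exists_verschiebung_eq_of_coeff_zero_eq_zero {x : WittVector p R} (hx : x.coeff 0 = 0) :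
    ∃ d, WittVector.verschiebung d = x :=
  ⟨x.shift 1, (WittVector.eq_iterate_verschiebung (n := 1) fun i hi => by
    rwa [Nat.lt_one_iff.mp hi]).symm⟩

theorem truncate_iterate_verschiebung_eq_zero (n : ℕ) (x : WittVector p R) :
    WittVector.truncate n (WittVector.verschiebung^[n] x) = 0 :=
  (WittVector.mem_ker_truncate n _).mpr fun _ => WittVector.iterate_verschiebung_coeff_eq_zero x

variable (p R) in
/-- The additive endomorphism `P = F - id` of the ring `W(R)` of Witt vectors of infinite length. -/
noncomputable def wittArtinSchreier : WittVector p R →+ WittVector p R :=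
  (WittVector.frobenius : WittVector p R →+* WittVector p R) - AddMonoidHom.id (WittVector p R)

theorem wittArtinSchreier_apply (x : WittVector p R) :
    wittArtinSchreier p R x = WittVector.frobenius x - x :=
  rfl

variable [CharP R p]

theorem commute_wittArtinSchreier_verschiebung :
    Function.Commute (wittArtinSchreier p R) (WittVector.verschiebung : _ →+ WittVector p R) :=
  fun x => by
    rw [wittArtinSchreier_apply, wittArtinSchreier_apply, map_sub,
      WittVector.verschiebung_frobenius_comm.eq]

theorem wittArtinSchreier_coeff_zero (x : WittVector p R) :
    (wittArtinSchreier p R x).coeff 0 = x.coeff 0 ^ p - x.coeff 0 := by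
  rw [wittArtinSchreier_apply, wittVector_sub_coeff_zero, WittVector.coeff_frobenius_charP]

theorem exists_wittArtinSchreier_add_verschiebung_eq (h : ∀ c : R, ∃ t, t ^ p - t = c)
    (a : WittVector p R) : ∃ x d, wittArtinSchreier p R x + WittVector.verschiebung d = a := by
  obtain ⟨t, ht⟩ := h (a.coeff 0)
  set x := WittVector.teichmuller p t
  have hx : (a - wittArtinSchreier p R x).coeff 0 = 0 := by
    rw [wittVector_sub_coeff_zero, wittArtinSchreier_coeff_zero,
      WittVector.teichmuller_coeff_zero, ht, sub_self]
  obtain ⟨d, hd⟩ := exists_verschiebung_eq_of_coeff_zero_eq_zero hx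
  exact ⟨x, d, by rw [hd, add_sub_cancel]⟩

theorem tfrob_truncate (n : ℕ) (x : WittVector p R) :
    TruncatedWittVector.tfrob p n R (WittVector.truncate n x) =
      WittVector.truncate n (WittVector.frobenius x) := by
  ext i
  simp only [TruncatedWittVector.tfrob, TruncatedWittVector.coeff_mk, WittVector.coeff_truncate,
    WittVector.coeff_frobenius_charP]

theorem tfrob_truncate_sub_truncate (n : ℕ) (x : WittVector p R) :
    TruncatedWittVector.tfrob p n R (WittVector.truncate n x) - WittVector.truncate n x =
      WittVector.truncate n (wittArtinSchreier p R x) := by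
  rw [tfrob_truncate, wittArtinSchreier_apply, map_sub]

end

theorem artinSchreierWitt_surjective_of_isAlgClosed_general
    {p : ℕ} [Fact p.Prime] {R : Type*} [CommRing R] [CharP R p]
    (h : ∀ c : R, ∃ t, t ^ p - t = c) (n : ℕ) (a : TruncatedWittVector p n R) :
    ∃ r : TruncatedWittVector p n R, TruncatedWittVector.tfrob p n R r - r = a := by
  obtain ⟨a, rfl⟩ := WittVector.truncate_surjective p n R a
  obtain ⟨x, d, rfl⟩ := exists_map_add_iterate_eq commute_wittArtinSchreier_verschiebung
    (exists_wittArtinSchreier_add_verschiebung_eq h) n a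
  refine ⟨WittVector.truncate n x, ?_⟩
  rw [tfrob_truncate_sub_truncate, map_add, truncate_iterate_verschiebung_eq_zero, add_zero]

/-- For a prime `p`, an algebraically closed field `K` of characteristic `p`
and `n ≥ 1`, the additive endomorphism `P = F - id` of `W_n(K)` is surjective: every
`a ∈ W_n(K)` is of the form `F(r) - r` for some `r ∈ W_n(K)`. -/
theorem artinSchreierWitt_surjective_of_isAlgClosed
    (p : ℕ) [Fact p.Prime] (K : Type) [Field K] [IsAlgClosed K] [CharP K p]
    (n : ℕ) (hn : 1 ≤ n) (a : TruncatedWittVector p n K) :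
    ∃ r : TruncatedWittVector p n K, TruncatedWittVector.tfrob p n K r - r = a :=
  artinSchreierWitt_surjective_of_isAlgClosed_general
    (exists_pow_sub_self_eq_of_isSepClosed (CharP.cast_eq_zero K p) (Fact.out : p.Prime).two_le) n a
end

section
/- Let p be a prime, K a field of characteristic p, K^sep a separable closure of K with Galois group G_K = Gal(K^sep/K) equipped with the Krull topology, and n ≥ 1. For a ∈ W_n(K), choose r ∈ W_n(K^sep) with F(r) − r = a; then the map sending the class of a in W_n(K)/P(W_n(K)) to the continuous homomorphism G_K → W_n(𝔽_p), g ↦ g·r − r (where G_K acts on W_n(K^sep) coordinatewise and W_n(𝔽_p) is identified with the F-fixed points of W_n(K^sep)), is a well-defined isomorphism of abelian groups W_n(K)/P(W_n(K)) ≅ Hom_cont(G_K, W_n(𝔽_p)). -/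
/-- The map `W_n(R) → W_n(S)` induced coordinatewise by a ring homomorphism `f : R → S`. -/
def TruncatedWittVector.tmap (p n : ℕ) {R S : Type*} [CommRing R] [CommRing S]
    (f : R →+* S) (x : TruncatedWittVector p n R) : TruncatedWittVector p n S :=
  TruncatedWittVector.mk p fun i => f (x.coeff i)

/-!
Write `P = F - id`. For every Galois extension `L/K` such that `x ^ p - x` is surjective on `L`, `P`
is the surjection in an exact sequence `0 → W_n(𝔽_p) → W_n(L) → W_n(L) → 0` of discrete
`Gal(L/K)`-modules, and `W_n(L)` has invariants `W_n(K)`. The homomorphism in question is the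
connecting homomorphism `W_n(K) → H¹(Gal(L/K), W_n(𝔽_p))`, whose cokernel embeds in the continuous
cohomology group `H¹(Gal(L/K), W_n(L))`. That group vanishes by the additive Hilbert 90 averaging
argument, because `W_n(L)` contains elements whose trace down from an open subgroup is a unit: the
Teichmüller representative of any element of nonzero trace.
-/

open Function groupCohomology
open scoped Topology

namespace ArtinSchreierWitt

section ConnectingHom

variable {G A B C M : Type*} [Group G] [AddCommGroup A] [AddCommGroup B] [AddCommGroup C]
  [AddCommGroup M] [DistribMulAction G A] [DistribMulAction G B]
  {i : C →+ A} {P : A →+[G] B} {j : M →+ B}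

theorem exists_addMonoidHom_eq_smul_sub (hi : Injective i) (hex : Exact i P)
    (hiG : ∀ (g : G) c, g • i c = i c) {r : A} (hr : ∀ g : G, g • P r = P r) :
    ∃ χ : Additive G →+ C, ∀ g, i (χ (.ofMul g)) = g • r - r := by
  have hmem (g : G) : g • r - r ∈ Set.range i := by
    rw [← hex, map_sub, map_smul, hr, sub_self]
  choose χ hχ using hmem
  have χ_mul (g h : G) : χ (g * h) = χ g + χ h := hi <| by
    rw [map_add, ← hiG g (χ h), hχ, hχ, hχ, smul_sub, smul_smul]
    abel
  exact ⟨AddMonoidHom.mk' (fun g => χ g.toMul) fun g h => χ_mul g.toMul h.toMul, hχ⟩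

theorem exists_forall_eq_smul_sub (hi : Injective i) (hex : Exact i P) (hP : Surjective P)
    (hiG : ∀ (g : G) c, g • i c = i c) (hjG : ∀ (g : G) m, g • j m = j m) (m : M) :
    ∃ χ : Additive G →+ C, ∀ r, P r = j m → ∀ g, i (χ (.ofMul g)) = g • r - r := by
  obtain ⟨s, hs⟩ := hP (j m)
  obtain ⟨χ, hχ⟩ := exists_addMonoidHom_eq_smul_sub hi hex hiG (r := s) fun g => by rw [hs, hjG]
  refine ⟨χ, fun r hr g => ?_⟩
  obtain ⟨c, hc⟩ : r - s ∈ Set.range i := by rw [← hex, map_sub, hr, hs, sub_self]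
  have hfix : g • r - g • s = r - s := by rw [← smul_sub, ← hc, hiG]
  rw [hχ, eq_comm, sub_eq_sub_iff_sub_eq_sub, hfix]

theorem exists_connectingHom (hi : Injective i) (hex : Exact i P) (hP : Surjective P)
    (hiG : ∀ (g : G) c, g • i c = i c) (hjG : ∀ (g : G) m, g • j m = j m) :
    ∃ δ : M →+ Additive G →+ C, ∀ m r, P r = j m → ∀ g, i (δ m (.ofMul g)) = g • r - r := by
  choose δ hδ using exists_forall_eq_smul_sub hi hex hP hiG hjG
  refine ⟨AddMonoidHom.mk' δ fun a b => AddMonoidHom.ext (Additive.forall.mpr fun g => hi ?_), hδ⟩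
  obtain ⟨r, hr⟩ := hP (j a)
  obtain ⟨s, hs⟩ := hP (j b)
  rw [hδ (a + b) (r + s) (by rw [map_add, map_add, hr, hs]), AddMonoidHom.add_apply, map_add,
    hδ a r hr, hδ b s hs, smul_add, add_sub_add_comm]

/-- The connecting homomorphism `B^G → H¹(G, C) = Hom(G, C)` of a short exact sequence
`0 → C → A → B → 0` of `G`-modules, with maps `i` and `P` and trivial action on `C`. The
invariants are presented by a homomorphism `j : M → B` with values in `B^G`, and `Hom(G, C)` is
encoded as `Additive G →+ C`. -/
noncomputable def connectingHom (hi : Injective i) (hex : Exact i P) (hP : Surjective P)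
    (hiG : ∀ (g : G) c, g • i c = i c) (hjG : ∀ (g : G) m, g • j m = j m) :
    M →+ Additive G →+ C :=
  (exists_connectingHom hi hex hP hiG hjG).choose

variable {hi : Injective i} {hex : Exact i P} {hP : Surjective P}
  {hiG : ∀ (g : G) c, g • i c = i c} {hjG : ∀ (g : G) m, g • j m = j m}

theorem map_connectingHom {m : M} {r : A} (hr : P r = j m) (g : G) :
    i (connectingHom hi hex hP hiG hjG m (.ofMul g)) = g • r - r :=
  (exists_connectingHom hi hex hP hiG hjG).choose_spec m r hr g

theorem connectingHom_eq_zero_iff {m : M} :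
    connectingHom hi hex hP hiG hjG m = 0 ↔ ∃ r, (∀ g : G, g • r = r) ∧ P r = j m := by
  constructor
  · intro h
    obtain ⟨r, hr⟩ := hP (j m)
    have hδ (g : G) : i (connectingHom hi hex hP hiG hjG m (.ofMul g)) = g • r - r :=
      map_connectingHom hr g
    exact ⟨r, fun g => sub_eq_zero.mp <| by
      rw [← hδ, h, AddMonoidHom.zero_apply, map_zero], hr⟩
  · rintro ⟨r, hfix, hr⟩
    refine AddMonoidHom.ext (Additive.forall.mpr fun g => hi ?_)
    rw [map_connectingHom hr, hfix, sub_self, AddMonoidHom.zero_apply, map_zero]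

theorem exists_connectingHom_eq (hj : ∀ b, (∀ g : G, g • b = b) → b ∈ Set.range j)
    {χ : Additive G →+ C} (hχ : IsCoboundary₁ fun g : G => i (χ (.ofMul g))) :
    ∃ m, connectingHom hi hex hP hiG hjG m = χ := by
  obtain ⟨r, hr⟩ := hχ
  obtain ⟨m, hm⟩ := hj (P r) fun g => by
    rw [← map_smul, ← sub_eq_zero, ← map_sub, hr]
    exact (hex _).mpr ⟨_, rfl⟩
  refine ⟨m, AddMonoidHom.ext (Additive.forall.mpr fun g => hi ?_)⟩
  rw [map_connectingHom hm.symm, hr]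

end ConnectingHom

section LocallyConstant

variable {G C : Type*} [Group G] [TopologicalSpace G] [AddCommGroup C]

theorem isLocallyConstant_of_eventually_eq_zero [IsTopologicalGroup G] {χ : Additive G →+ C}
    (hχ : ∀ᶠ g in 𝓝 (1 : G), χ (.ofMul g) = 0) :
    IsLocallyConstant fun g : G => χ (.ofMul g) := by
  rw [IsLocallyConstant.iff_eventually_eq]
  intro g
  rw [← map_mul_left_nhds_one g, Filter.eventually_map]
  filter_upwards [hχ] with h hh
  rw [ofMul_mul, map_add, hh, add_zero]

end LocallyConstant

section HilbertNinety

variable {G A : Type*} [Group G] {H : Subgroup G} [Fintype (G ⧸ H)]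

theorem sum_quotient_out_mul_left [AddCommMonoid A] {f : G → A}
    (hf : ∀ g, ∀ h ∈ H, f (g * h) = f g) (g : G) :
    ∑ x : G ⧸ H, f (g * x.out) = ∑ x : G ⧸ H, f x.out := by
  refine Fintype.sum_equiv (MulAction.toPerm g) _ _ fun x => ?_
  have hmem : (g * x.out)⁻¹ * (g • x).out ∈ H := by
    rw [← QuotientGroup.eq, QuotientGroup.out_eq']
    exact congrArg (g • ·) (QuotientGroup.out_eq' x)
  rw [← hf _ _ hmem, mul_inv_cancel_left, MulAction.toPerm_apply]

theorem isCoboundary₁_of_isUnit_trace [Ring A] [MulSemiringAction G A] {c : G → A}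
    (hc : IsCocycle₁ c) (hcH : ∀ h ∈ H, c h = 0) {t : A} (ht : ∀ h ∈ H, h • t = t)
    (hs : IsUnit (∑ x : G ⧸ H, x.out • t)) : IsCoboundary₁ c := by
  obtain ⟨s, hs⟩ := hs
  have ht_mul : ∀ g, ∀ h ∈ H, (g * h) • t = g • t := fun g h hh => by rw [mul_smul, ht h hh]
  have hc_mul : ∀ g, ∀ h ∈ H, c (g * h) = c g := fun g h hh => by
    rw [hc, hcH h hh, smul_zero, zero_add]
  have smul_s (g : G) : g • (s : A) = s := by
    simpa only [hs, Finset.smul_sum, smul_smul] using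
      sum_quotient_out_mul_left (f := (· • t)) ht_mul g
  have smul_s_inv (g : G) : g • (↑s⁻¹ : A) = ↑s⁻¹ := by
    rw [← s.mul_right_inj, s.mul_inv, ← smul_s g, ← smul_mul', s.mul_inv, smul_one]
  set w := ∑ x : G ⧸ H, c x.out * x.out • t with hw
  have smul_w (g : G) : g • w = w - c g * s := calc
    g • w = ∑ x : G ⧸ H, (c (g * x.out) - c g) * (g * x.out) • t := by
      simp only [hw, Finset.smul_sum, smul_mul', smul_smul, hc g, add_sub_cancel_right]
    _ = ∑ x : G ⧸ H, (c x.out - c g) * x.out • t :=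
      sum_quotient_out_mul_left (f := fun k => (c k - c g) * k • t)
        (fun k h hh => by rw [hc_mul k h hh, ht_mul k h hh]) g
    _ = w - c g * s := by simp only [sub_mul, Finset.sum_sub_distrib, ← Finset.mul_sum, hs, hw]
  refine ⟨-(w * ↑s⁻¹), fun g => ?_⟩
  rw [smul_neg, smul_mul', smul_s_inv, smul_w, sub_mul, mul_assoc, s.mul_inv, mul_one]
  abel

end HilbertNinety

section GaloisTrace

variable {K L : Type*} [Field K] [Field L] [Algebra K L] (E : IntermediateField K L)

theorem injective_quotient_out_domRestrict :
    Injective fun x : Gal(L/K) ⧸ E.fixingSubgroup => (x.out : L →ₐ[K] L).comp E.val := by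
  intro x y hxy
  rw [← QuotientGroup.out_eq' x, ← QuotientGroup.out_eq' y, QuotientGroup.eq,
    IntermediateField.mem_fixingSubgroup_iff]
  intro t ht
  rw [AlgEquiv.mul_apply, ← show x.out t = y.out t from DFunLike.congr_fun hxy ⟨t, ht⟩]
  exact x.out.symm_apply_apply t

instance finite_quotient_fixingSubgroup [FiniteDimensional K E] :
    Finite (Gal(L/K) ⧸ E.fixingSubgroup) :=
  .of_injective _ (injective_quotient_out_domRestrict E)

theorem exists_sum_quotient_out_ne_zero [Fintype (Gal(L/K) ⧸ E.fixingSubgroup)] :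
    ∃ t : E, ∑ x : Gal(L/K) ⧸ E.fixingSubgroup, x.out • (t : L) ≠ 0 := by
  by_contra! h
  let φ (x : Gal(L/K) ⧸ E.fixingSubgroup) : E →* L := ((x.out : L →ₐ[K] L).comp E.val : E →+* L)
  have hφ : Injective φ := fun x y hxy => injective_quotient_out_domRestrict E <|
    AlgHom.ext fun t => DFunLike.congr_fun hxy t
  have hli := Fintype.linearIndependent_iff.mp ((linearIndependent_monoidHom E L).comp φ hφ)
    (fun _ => 1) (funext fun t => by simpa [φ] using h t)
  exact one_ne_zero (hli (QuotientGroup.mk 1))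

end GaloisTrace

section TruncatedWittVector

open TruncatedWittVector

variable {p n : ℕ} [Fact p.Prime] {R S : Type*} [CommRing R] [CommRing S]

theorem tmap_truncate (f : R →+* S) (x : WittVector p R) :
    tmap p n f (WittVector.truncate n x) = WittVector.truncate n (WittVector.map f x) := by
  ext i
  simp only [tmap, coeff_mk, WittVector.coeff_truncate, WittVector.map_coeff]

/-- The coordinatewise map `W_n(R) → W_n(S)` as a ring homomorphism. -/
def mapRingHom (f : R →+* S) : TruncatedWittVector p n R →+* TruncatedWittVector p n S where
  toFun := tmap p n f
  map_zero' := by rw [← map_zero (WittVector.truncate n), tmap_truncate, map_zero, map_zero]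
  map_one' := by rw [← map_one (WittVector.truncate n), tmap_truncate, map_one, map_one]
  map_add' x y := by
    obtain ⟨x, rfl⟩ := WittVector.truncate_surjective p n R x
    obtain ⟨y, rfl⟩ := WittVector.truncate_surjective p n R y
    simp only [← map_add, tmap_truncate]
  map_mul' x y := by
    obtain ⟨x, rfl⟩ := WittVector.truncate_surjective p n R x
    obtain ⟨y, rfl⟩ := WittVector.truncate_surjective p n R y
    simp only [← map_mul, tmap_truncate]

@[simp]
theorem coeff_mapRingHom (f : R →+* S) (x : TruncatedWittVector p n R) (i : Fin n) :
    (mapRingHom f x).coeff i = f (x.coeff i) :=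
  coeff_mk _ i

theorem mapRingHom_injective {f : R →+* S} (hf : Injective f) :
    Injective (mapRingHom f : TruncatedWittVector p n R → TruncatedWittVector p n S) :=
  fun x y h => ext fun i => hf <| by rw [← coeff_mapRingHom, h, coeff_mapRingHom]

theorem mem_range_mapRingHom_iff {f : R →+* S} {x : TruncatedWittVector p n S} :
    x ∈ Set.range (mapRingHom f) ↔ ∀ i, x.coeff i ∈ Set.range f := by
  constructor
  · rintro ⟨y, rfl⟩ i
    exact ⟨y.coeff i, (coeff_mapRingHom f y i).symm⟩
  · intro h
    choose y hy using h
    exact ⟨mk p y, ext fun i => by rw [coeff_mapRingHom, coeff_mk, hy]⟩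

theorem mapRingHom_tfrob (f : R →+* S) (x : TruncatedWittVector p n R) :
    mapRingHom f (tfrob p n R x) = tfrob p n S (mapRingHom f x) := by
  ext i
  simp only [tfrob, coeff_mapRingHom, coeff_mk, map_pow]

section Action

variable {G : Type*} [Group G] [MulSemiringAction G R]

/-- The coordinatewise action on `W_n(R)` of a group acting on `R`. -/
noncomputable instance instMulSemiringAction : MulSemiringAction G (TruncatedWittVector p n R) where
  smul g := mapRingHom (MulSemiringAction.toRingHom G R g)
  one_smul x := ext fun i => (coeff_mapRingHom _ x i).trans (one_smul G _)
  mul_smul g h x := ext fun i => by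
    change (mapRingHom _ x).coeff i = (mapRingHom _ (mapRingHom _ x)).coeff i
    simp only [coeff_mapRingHom, MulSemiringAction.toRingHom_apply, mul_smul]
  smul_zero g := map_zero (mapRingHom _)
  smul_add g := map_add (mapRingHom _)
  smul_one g := map_one (mapRingHom _)
  smul_mul g := map_mul (mapRingHom _)

@[simp]
theorem coeff_smul (g : G) (x : TruncatedWittVector p n R) (i : Fin n) :
    (g • x).coeff i = g • x.coeff i :=
  coeff_mapRingHom _ x i

theorem smul_truncate_teichmuller (g : G) (t : R) :
    g • WittVector.truncate n (WittVector.teichmuller p t) =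
      WittVector.truncate n (WittVector.teichmuller p (g • t)) := by
  refine (tmap_truncate (MulSemiringAction.toRingHom G R g) _).trans ?_
  rw [WittVector.map_teichmuller, MulSemiringAction.toRingHom_apply]

theorem smul_tfrob (g : G) (x : TruncatedWittVector p n R) :
    g • tfrob p n R x = tfrob p n R (g • x) :=
  mapRingHom_tfrob _ x

theorem smul_mapRingHom_castHom [CharP R p] (g : G) (c : TruncatedWittVector p n (ZMod p)) :
    g • mapRingHom (ZMod.castHom (dvd_refl p) R) c =
      mapRingHom (ZMod.castHom (dvd_refl p) R) c := by
  ext i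
  rw [coeff_smul, coeff_mapRingHom]
  exact DFunLike.congr_fun (Subsingleton.elim
    ((MulSemiringAction.toRingHom G R g).comp (ZMod.castHom (dvd_refl p) R)) _) (c.coeff i)

theorem smul_mapRingHom_algebraMap [Algebra S R] [SMulCommClass G S R] (g : G)
    (a : TruncatedWittVector p n S) :
    g • mapRingHom (algebraMap S R) a = mapRingHom (algebraMap S R) a := by
  ext i
  rw [coeff_smul, coeff_mapRingHom, smul_algebraMap]

theorem mem_range_mapRingHom_algebraMap [Algebra S R] [Algebra.IsInvariant S R G]
    {x : TruncatedWittVector p n R} (hx : ∀ g : G, g • x = x) :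
    x ∈ Set.range (mapRingHom (algebraMap S R)) :=
  mem_range_mapRingHom_iff.mpr fun i =>
    Algebra.IsInvariant.isInvariant (G := G) _ fun g => by rw [← coeff_smul, hx]

variable (p n G R) in
/-- The Artin–Schreier–Witt operator `P = F - id` on `W_n(R)`, as a morphism of `G`-modules for any
group `G` acting on `R`. -/
noncomputable def artinSchreierOperator [CharP R p] :
    TruncatedWittVector p n R →+[G] TruncatedWittVector p n R where
  toFun r := tfrob p n R r - r
  map_smul' g r := by rw [MonoidHom.id_apply, smul_sub, smul_tfrob]
  map_zero' := sub_eq_zero.mpr (map_zero (mapRingHom (frobenius R p)))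
  map_add' r s := by
    have hadd : tfrob p n R (r + s) = tfrob p n R r + tfrob p n R s :=
      map_add (mapRingHom (frobenius R p)) r s
    rw [hadd, add_sub_add_comm]

end Action

section ExactSequence

theorem exists_frobenius_sub_add_iterate_verschiebung [CharP R p]
    (hR : ∀ a : R, ∃ x, x ^ p - x = a) (n : ℕ) (a : WittVector p R) :
    ∃ r b : WittVector p R,
      WittVector.frobenius r - r + WittVector.verschiebung^[n] b = a := by
  induction n generalizing a with
  | zero => exact ⟨0, a, by simp⟩
  | succ n ih =>
    obtain ⟨x, hx⟩ := hR (a.coeff 0)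
    set t := WittVector.teichmuller p x with ht
    have coeff_zero : (a - (WittVector.frobenius t - t)).coeff 0 = 0 := by
      simp only [← WittVector.constantCoeff_apply, map_sub]
      simp only [WittVector.constantCoeff_apply, WittVector.coeff_frobenius_charP, ht,
        WittVector.teichmuller_coeff_zero, hx, sub_self]
    obtain ⟨a', ha'⟩ : ∃ a', a - (WittVector.frobenius t - t) = WittVector.verschiebung a' :=
      ⟨_, WittVector.eq_iterate_verschiebung (n := 1) (by simpa using coeff_zero)⟩
    obtain ⟨r, b, hrb⟩ := ih a'
    refine ⟨t + WittVector.verschiebung r, b, ?_⟩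
    rw [iterate_succ_apply', eq_add_of_sub_eq ha', ← hrb, map_add, map_add, map_sub,
      ← WittVector.verschiebung_frobenius_comm r]
    ring

theorem artinSchreierOperator_surjective {G : Type*} [Group G] [MulSemiringAction G R] [CharP R p]
    (hR : ∀ a : R, ∃ x, x ^ p - x = a) : Surjective (artinSchreierOperator p n R G) := by
  intro a
  obtain ⟨a, rfl⟩ := WittVector.truncate_surjective p n R a
  obtain ⟨r, b, rfl⟩ := exists_frobenius_sub_add_iterate_verschiebung hR n a
  have truncate_b : WittVector.truncate n (WittVector.verschiebung^[n] b) = 0 :=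
    (WittVector.mem_ker_truncate n _).mpr fun _ =>
      WittVector.iterate_verschiebung_coeff_eq_zero b
  refine ⟨WittVector.truncate n r, ?_⟩
  rw [map_add, truncate_b, add_zero, map_sub, WittVector.frobenius_eq_map_frobenius,
    ← tmap_truncate]
  rfl

theorem exact_mapRingHom_artinSchreierOperator {L G : Type*} [Field L] [CharP L p] [Group G]
    [MulSemiringAction G L] :
    Exact (mapRingHom (ZMod.castHom (dvd_refl p) L)) (artinSchreierOperator p n L G) := by
  intro x
  have pow_eq_iff (i : Fin n) : x.coeff i ^ p = x.coeff i ↔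
      x.coeff i ∈ Set.range (ZMod.castHom (dvd_refl p) L) := by
    rw [← Subfield.mem_bot_iff_pow_eq_self, ← ZMod.fieldRange_castHom_eq_bot p]
    rfl
  rw [mem_range_mapRingHom_iff, ← forall_congr' pow_eq_iff]
  refine sub_eq_zero.trans (TruncatedWittVector.ext_iff.trans ?_)
  simp only [tfrob, coeff_mk]

end ExactSequence

end TruncatedWittVector

section GaloisCohomology

open TruncatedWittVector

variable {p n : ℕ} [Fact p.Prime] {K L : Type*} [Field K] [Field L] [Algebra K L]

variable (p) in
theorem exists_pow_sub_self_eq [CharP L p] [IsSepClosed L] (a : L) :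
    ∃ x, x ^ p - x = a := by
  obtain ⟨x, hx⟩ := IsSepClosed.exists_root_C_mul_X_pow_add_C_mul_X_add_C' p p 1 (-1) (-a) dvd_rfl
    (Fact.out : p.Prime).two_le (neg_ne_zero.mpr one_ne_zero)
  exact ⟨x, by linear_combination hx⟩

theorem isUnit_truncate [CharP L p] {x : WittVector p L} (hx : x.coeff 0 ≠ 0) :
    IsUnit (WittVector.truncate n x) :=
  (WittVector.isUnit_of_coeff_zero_ne_zero x hx).map _

theorem isCoboundary₁_of_eventually_eq_zero [CharP L p] {c : Gal(L/K) → TruncatedWittVector p n L}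
    (hc : IsCocycle₁ c) (hc_one : ∀ᶠ g in 𝓝 1, c g = 0) : IsCoboundary₁ c := by
  obtain ⟨E, _, hE⟩ := (krullTopology_mem_nhds_one_iff K L _).mp hc_one
  have := Fintype.ofFinite (Gal(L/K) ⧸ E.fixingSubgroup)
  obtain ⟨t, ht⟩ := exists_sum_quotient_out_ne_zero E
  let τ := WittVector.truncate n (WittVector.teichmuller p (t : L))
  refine isCoboundary₁_of_isUnit_trace (H := E.fixingSubgroup) (t := τ) hc (fun h hh => hE hh)
    (fun h hh => ?_) ?_
  · rw [smul_truncate_teichmuller]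
    congr 2
    exact (IntermediateField.mem_fixingSubgroup_iff E h).mp hh t t.2
  · simp only [τ, smul_truncate_teichmuller, ← map_sum]
    apply isUnit_truncate
    rw [← WittVector.constantCoeff_apply, map_sum]
    simpa only [WittVector.constantCoeff_apply, WittVector.teichmuller_coeff_zero] using ht

theorem eventually_smul_eq [Algebra.IsIntegral K L] (r : TruncatedWittVector p n L) :
    ∀ᶠ g : Gal(L/K) in 𝓝 1, g • r = r := by
  have coeff_fixed (i : Fin n) : ∀ᶠ g : Gal(L/K) in 𝓝 1, g • r.coeff i = r.coeff i :=
    (stabilizer_isOpen_of_isIntegral (r.coeff i)).mem_nhds (one_mem _)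
  filter_upwards [Filter.eventually_all.mpr coeff_fixed] with g hg
  exact ext fun i => by rw [coeff_smul, hg]

end GaloisCohomology

section ArtinSchreierWittHom

open TruncatedWittVector

variable {p n : ℕ} [Fact p.Prime] {K L : Type*} [Field K] [Field L] [Algebra K L] [CharP L p]
  (hL : ∀ a : L, ∃ x, x ^ p - x = a)

variable (n K) in
/-- The Artin–Schreier–Witt homomorphism `W_n(K) → Hom(Gal(L/K), W_n(𝔽_p))`, sending `a` to
`g ↦ g r - r` for any `r ∈ W_n(L)` with `F(r) - r = a`; see `map_artinSchreierWittHom`. -/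
noncomputable def artinSchreierWittHom :
    TruncatedWittVector p n K →+ Additive Gal(L/K) →+ TruncatedWittVector p n (ZMod p) :=
  connectingHom (G := Gal(L/K))
    (i := (mapRingHom (ZMod.castHom (dvd_refl p) L)).toAddMonoidHom)
    (P := artinSchreierOperator p n L Gal(L/K))
    (j := (mapRingHom (algebraMap K L)).toAddMonoidHom)
    (mapRingHom_injective (ZMod.castHom (dvd_refl p) L).injective)
    exact_mapRingHom_artinSchreierOperator (artinSchreierOperator_surjective hL)
    smul_mapRingHom_castHom smul_mapRingHom_algebraMap

theorem map_artinSchreierWittHom {a : TruncatedWittVector p n K} {r : TruncatedWittVector p n L}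
    (hr : tfrob p n L r - r = mapRingHom (algebraMap K L) a) (g : Gal(L/K)) :
    mapRingHom (ZMod.castHom (dvd_refl p) L) (artinSchreierWittHom n K hL a (.ofMul g)) =
      g • r - r :=
  map_connectingHom (i := (mapRingHom (ZMod.castHom (dvd_refl p) L)).toAddMonoidHom)
    (P := artinSchreierOperator p n L Gal(L/K))
    (j := (mapRingHom (algebraMap K L)).toAddMonoidHom) hr g

theorem isLocallyConstant_artinSchreierWittHom [Algebra.IsIntegral K L]
    (a : TruncatedWittVector p n K) :
    IsLocallyConstant fun g : Gal(L/K) => artinSchreierWittHom n K hL a (.ofMul g) := by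
  obtain ⟨r, hr⟩ := artinSchreierOperator_surjective (G := Gal(L/K)) hL
    (mapRingHom (algebraMap K L) a)
  apply isLocallyConstant_of_eventually_eq_zero
  filter_upwards [eventually_smul_eq r] with g hg
  apply mapRingHom_injective (ZMod.castHom (dvd_refl p) L).injective
  rw [map_artinSchreierWittHom hL hr, hg, sub_self, map_zero]

theorem artinSchreierWittHom_eq_zero_iff [IsGalois K L] {a : TruncatedWittVector p n K} :
    artinSchreierWittHom n K hL a = 0 ↔ ∃ r, tfrob p n K r - r = a := by
  have map_P (r : TruncatedWittVector p n K) : mapRingHom (algebraMap K L) (tfrob p n K r - r) =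
      tfrob p n L (mapRingHom (algebraMap K L) r) - mapRingHom (algebraMap K L) r := by
    rw [map_sub, mapRingHom_tfrob]
  refine connectingHom_eq_zero_iff.trans ⟨?_, ?_⟩
  · rintro ⟨s, hs, hPs⟩
    obtain ⟨r, rfl⟩ := mem_range_mapRingHom_algebraMap (S := K) hs
    exact ⟨r, mapRingHom_injective (algebraMap K L).injective ((map_P r).trans hPs)⟩
  · rintro ⟨r, rfl⟩
    exact ⟨mapRingHom (algebraMap K L) r, (smul_mapRingHom_algebraMap · r), (map_P r).symm⟩

theorem exists_artinSchreierWittHom_eq [IsGalois K L]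
    {χ : Additive Gal(L/K) →+ TruncatedWittVector p n (ZMod p)}
    (hχ : ∀ᶠ g in 𝓝 (1 : Gal(L/K)), χ (.ofMul g) = 0) :
    ∃ a, artinSchreierWittHom n K hL a = χ := by
  let c (g : Gal(L/K)) := mapRingHom (ZMod.castHom (dvd_refl p) L) (χ (.ofMul g))
  have hc : IsCocycle₁ c := fun g h => by
    simp only [c, smul_mapRingHom_castHom, ofMul_mul, map_add, add_comm]
  have hc_one : ∀ᶠ g in 𝓝 1, c g = 0 := hχ.mono fun g hg => by simp only [c, hg, map_zero]
  exact exists_connectingHom_eq (fun _ => mem_range_mapRingHom_algebraMap)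
    (isCoboundary₁_of_eventually_eq_zero hc hc_one)

end ArtinSchreierWittHom

end ArtinSchreierWitt

open TruncatedWittVector ArtinSchreierWitt in
theorem artinSchreierWitt_iso_hom_cont_general
    (p : ℕ) [Fact p.Prime] (K L : Type*) [Field K] [Field L] [CharP L p] [Algebra K L]
    [IsGalois K L] (hL : ∀ a : L, ∃ x, x ^ p - x = a) (n : ℕ) :
    ∃ Φ : TruncatedWittVector p n K → (L ≃ₐ[K] L) → TruncatedWittVector p n (ZMod p),
      (∀ a : TruncatedWittVector p n K,
        ∃ r : TruncatedWittVector p n L,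
          tfrob p n L r - r = tmap p n (algebraMap K L) a) ∧
      (∀ (a : TruncatedWittVector p n K) (r : TruncatedWittVector p n L),
        tfrob p n L r - r = tmap p n (algebraMap K L) a →
        ∀ g : L ≃ₐ[K] L,
          tmap p n (ZMod.castHom (dvd_refl p) L) (Φ a g) =
            tmap p n (g : L →+* L) r - r) ∧
      (∀ (a : TruncatedWittVector p n K) (g h : L ≃ₐ[K] L),
        Φ a (g * h) = Φ a g + Φ a h) ∧
      (∀ a : TruncatedWittVector p n K,
        @Continuous _ _ (krullTopology K L) ⊥ (Φ a)) ∧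
      (∀ a b : TruncatedWittVector p n K, Φ (a + b) = Φ a + Φ b) ∧
      (∀ a : TruncatedWittVector p n K,
        (∀ g : L ≃ₐ[K] L, Φ a g = 0) ↔
          ∃ r : TruncatedWittVector p n K, tfrob p n K r - r = a) ∧
      (∀ χ : (L ≃ₐ[K] L) → TruncatedWittVector p n (ZMod p),
        (∀ g h : L ≃ₐ[K] L, χ (g * h) = χ g + χ h) →
        @Continuous _ _ (krullTopology K L) ⊥ χ →
          ∃ a : TruncatedWittVector p n K, Φ a = χ) := by
  let Φ := artinSchreierWittHom n K hL
  refine ⟨fun a g => Φ a (.ofMul g), fun a => ?_, fun a r hr => ?_, fun a g h => ?_,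
    fun a => ?_, fun a b => ?_, fun a => ?_, fun χ hmul hcont => ?_⟩
  · exact artinSchreierOperator_surjective (G := Gal(L/K)) hL (tmap p n (algebraMap K L) a)
  · exact map_artinSchreierWittHom hL hr
  · exact map_add (Φ a) (.ofMul g) (.ofMul h)
  · exact continuous_def.mpr fun s _ => isLocallyConstant_artinSchreierWittHom hL a s
  · exact funext fun g => DFunLike.congr_fun (map_add Φ a b) (.ofMul g)
  · rw [← artinSchreierWittHom_eq_zero_iff hL, DFunLike.ext_iff, Additive.forall]
    rfl
  · let χ' : Additive Gal(L/K) →+ TruncatedWittVector p n (ZMod p) :=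
      AddMonoidHom.mk' (fun g => χ g.toMul) fun g h => hmul g.toMul h.toMul
    have hχ : ∀ᶠ g in 𝓝 (1 : Gal(L/K)), χ' (.ofMul g) = 0 :=
      (continuous_def.mp hcont {0} trivial).mem_nhds (map_zero χ')
    obtain ⟨a, ha⟩ := exists_artinSchreierWittHom_eq hL hχ
    exact ⟨a, funext fun g => DFunLike.congr_fun ha (.ofMul g)⟩

open TruncatedWittVector in
/-- Let `p` be a prime, `K` a field of characteristic `p`, `L` a separable
closure of `K` with Galois group `G_K = L ≃ₐ[K] L` carrying the Krull topology, and
`n ≥ 1`.  There is a map `Φ` sending `a ∈ W_n(K)` to the continuous homomorphism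
`G_K → W_n(𝔽_p)`, `g ↦ g·r - r`, where `r ∈ W_n(L)` is any solution of `F(r) - r = a`
(such `r` exist; `g` acts coordinatewise and `W_n(𝔽_p)` is identified with the
`F`-fixed vectors of `W_n(L)` via the coordinatewise inclusion `𝔽_p → L`); `Φ` is
independent of the choice of `r`, additive, its kernel is exactly `P(W_n(K))`, and every
continuous homomorphism `G_K → W_n(𝔽_p)` arises this way.  In other words, `Φ` descends
to a well-defined isomorphism of abelian groups
`W_n(K)/P(W_n(K)) ≅ Hom_cont(G_K, W_n(𝔽_p))`. -/
theorem artinSchreierWitt_iso_hom_cont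
    (p : ℕ) [Fact p.Prime] (K L : Type) [Field K] [CharP K p] [Field L] [CharP L p]
    [Algebra K L] [IsSepClosure K L] (n : ℕ) (hn : 1 ≤ n) :
    ∃ Φ : TruncatedWittVector p n K → (L ≃ₐ[K] L) → TruncatedWittVector p n (ZMod p),
      (∀ a : TruncatedWittVector p n K,
        ∃ r : TruncatedWittVector p n L,
          tfrob p n L r - r = tmap p n (algebraMap K L) a) ∧
      (∀ (a : TruncatedWittVector p n K) (r : TruncatedWittVector p n L),
        tfrob p n L r - r = tmap p n (algebraMap K L) a →
        ∀ g : L ≃ₐ[K] L,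
          tmap p n (ZMod.castHom (dvd_refl p) L) (Φ a g) =
            tmap p n (g : L →+* L) r - r) ∧
      (∀ (a : TruncatedWittVector p n K) (g h : L ≃ₐ[K] L),
        Φ a (g * h) = Φ a g + Φ a h) ∧
      (∀ a : TruncatedWittVector p n K,
        @Continuous _ _ (krullTopology K L) ⊥ (Φ a)) ∧
      (∀ a b : TruncatedWittVector p n K, Φ (a + b) = Φ a + Φ b) ∧
      (∀ a : TruncatedWittVector p n K,
        (∀ g : L ≃ₐ[K] L, Φ a g = 0) ↔
          ∃ r : TruncatedWittVector p n K, tfrob p n K r - r = a) ∧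
      (∀ χ : (L ≃ₐ[K] L) → TruncatedWittVector p n (ZMod p),
        (∀ g h : L ≃ₐ[K] L, χ (g * h) = χ g + χ h) →
        @Continuous _ _ (krullTopology K L) ⊥ χ →
          ∃ a : TruncatedWittVector p n K, Φ a = χ) := by
  have := IsSepClosure.sep_closed (k := K) (K := L)
  exact artinSchreierWitt_iso_hom_cont_general p K L
    (ArtinSchreierWitt.exists_pow_sub_self_eq p) n
end

section
/- Let p be a prime. For every finite abelian p-group A there exists a finite p-group B whose commutator subgroup [B,B] is isomorphic to A. -/
/-!
A biadditive pairing `φ : X × Y → Z` of abelian groups makes `X × Y × Z` into a Heisenberg group,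
in which the commutators are the central elements `(0, 0, φ x₁ y₂ - φ x₂ y₁)`; its commutator
subgroup is therefore generated by the values of `φ`. If `X`, `Y` and `Z` are `p`-groups then so is
the Heisenberg group, and it remains to realise a `p`-primary group `Z` as the set of values of a
pairing of `p`-primary groups. Evaluation of homomorphisms does this: take for `X` the `p`-primary
part of `∏ z : Z, ⟨z⟩` and for `Y` the `p`-primary part of `Hom(X, Z)`. The projection
`X → ⟨z⟩ ⊆ Z` belongs to `Y`, since it is killed by the order of `z`, and it takes the value `z`
on the element `z` of the factor `⟨z⟩`.
-/

universe u

theorem isPGroup_prod {p : ℕ} {G H : Type*} [Group G] [Group H] (hG : IsPGroup p G)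
    (hH : IsPGroup p H) : IsPGroup p (G × H) := by
  rintro ⟨g, h⟩
  obtain ⟨j, hj⟩ := hG g
  obtain ⟨k, hk⟩ := hH h
  refine ⟨j + k, Prod.ext ?_ ?_⟩
  · simp [pow_add, pow_mul, hj]
  · simp [add_comm j, pow_add, pow_mul, hk]

/-- The Heisenberg group of a biadditive pairing `φ : X →+ Y →+ Z`: the set `X × Y × Z` with the
product `(x₁, y₁, z₁) * (x₂, y₂, z₂) = (x₁ + x₂, y₁ + y₂, z₁ + z₂ + φ x₁ y₂)`. It is the central
extension of `X × Y` by `Z` with cocycle `φ`. -/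
@[ext]
structure HeisenbergGroup {X Y Z : Type*} [AddCommGroup X] [AddCommGroup Y] [AddCommGroup Z]
    (φ : X →+ Y →+ Z) where
  left : X
  right : Y
  central : Z

namespace HeisenbergGroup

variable {X Y Z : Type*} [AddCommGroup X] [AddCommGroup Y] [AddCommGroup Z] {φ : X →+ Y →+ Z}

instance : Mul (HeisenbergGroup φ) :=
  ⟨fun g h ↦ ⟨g.left + h.left, g.right + h.right, g.central + h.central + φ g.left h.right⟩⟩

instance : One (HeisenbergGroup φ) := ⟨⟨0, 0, 0⟩⟩

instance : Inv (HeisenbergGroup φ) :=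
  ⟨fun g ↦ ⟨-g.left, -g.right, -g.central + φ g.left g.right⟩⟩

@[simp] theorem mul_left (g h : HeisenbergGroup φ) : (g * h).left = g.left + h.left := rfl

@[simp] theorem mul_right (g h : HeisenbergGroup φ) : (g * h).right = g.right + h.right := rfl

@[simp] theorem mul_central (g h : HeisenbergGroup φ) :
    (g * h).central = g.central + h.central + φ g.left h.right := rfl

@[simp] theorem one_left : (1 : HeisenbergGroup φ).left = 0 := rfl

@[simp] theorem one_right : (1 : HeisenbergGroup φ).right = 0 := rfl

@[simp] theorem one_central : (1 : HeisenbergGroup φ).central = 0 := rfl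

@[simp] theorem inv_left (g : HeisenbergGroup φ) : g⁻¹.left = -g.left := rfl

@[simp] theorem inv_right (g : HeisenbergGroup φ) : g⁻¹.right = -g.right := rfl

@[simp] theorem inv_central (g : HeisenbergGroup φ) :
    g⁻¹.central = -g.central + φ g.left g.right := rfl

instance : Group (HeisenbergGroup φ) :=
  Group.ofLeftAxioms
    (fun g h k ↦ by ext <;> simp <;> abel)
    (fun g ↦ by ext <;> simp)
    (fun g ↦ by ext <;> simp)

instance [Finite X] [Finite Y] [Finite Z] : Finite (HeisenbergGroup φ) :=
  Finite.of_injective (fun g ↦ (g.left, g.right, g.central)) fun g h hgh ↦ by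
    simpa [HeisenbergGroup.ext_iff] using hgh

variable (φ) in
/-- The inclusion `z ↦ (0, 0, z)` of `Z` as a central subgroup. -/
@[simps]
def centralHom : Multiplicative Z →* HeisenbergGroup φ where
  toFun z := ⟨0, 0, z.toAdd⟩
  map_one' := rfl
  map_mul' z w := by ext <;> simp

theorem centralHom_injective : Function.Injective (centralHom φ) :=
  fun _ _ h ↦ congrArg central h

variable (φ) in
/-- The projection `(x, y, z) ↦ (x, y)` modulo the central subgroup `Z`. -/
@[simps]
def projHom : HeisenbergGroup φ →* Multiplicative X × Multiplicative Y where
  toFun g := (.ofAdd g.left, .ofAdd g.right)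
  map_one' := rfl
  map_mul' _ _ := rfl

theorem ker_projHom : (projHom φ).ker = (centralHom φ).range := by
  ext g
  simp [MonoidHom.mem_ker, HeisenbergGroup.ext_iff, Prod.ext_iff, eq_comm (a := (0 : X)),
    eq_comm (a := (0 : Y)), Multiplicative.exists]

theorem isPGroup {p : ℕ} (hX : IsPGroup p (Multiplicative X)) (hY : IsPGroup p (Multiplicative Y))
    (hZ : IsPGroup p (Multiplicative Z)) : IsPGroup p (HeisenbergGroup φ) := by
  have hker : IsPGroup p (projHom φ).ker := by
    rw [ker_projHom]
    exact hZ.of_surjective _ (centralHom φ).rangeRestrict_surjective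
  have hcomap := ((isPGroup_prod hX hY).to_subgroup ⊤).comap_of_ker_isPGroup (projHom φ) hker
  rw [Subgroup.comap_top] at hcomap
  exact hcomap.of_equiv Subgroup.topEquiv

open scoped commutatorElement

theorem commutatorElement_eq (g h : HeisenbergGroup φ) :
    ⁅g, h⁆ = centralHom φ (.ofAdd (φ g.left h.right - φ h.left g.right)) := by
  ext
  · simp [commutatorElement_def, -ofAdd_sub]
  · simp [commutatorElement_def, -ofAdd_sub]
  · simp only [commutatorElement_def, mul_left, inv_left, inv_right, mul_central, inv_central,
      centralHom_apply_central, toAdd_ofAdd, map_add, map_neg, AddMonoidHom.add_apply,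
      AddMonoidHom.neg_apply]
    abel

theorem commutator_eq_map_closure :
    commutator (HeisenbergGroup φ) =
      (Subgroup.closure {z | ∃ x y, .ofAdd (φ x y) = z}).map (centralHom φ) := by
  apply le_antisymm
  · rw [commutator_def, Subgroup.commutator_le]
    intro g _ h _
    rw [commutatorElement_eq, ofAdd_sub]
    exact Subgroup.mem_map_of_mem _ (div_mem (Subgroup.subset_closure ⟨_, _, rfl⟩)
      (Subgroup.subset_closure ⟨_, _, rfl⟩))
  · rw [Subgroup.map_le_iff_le_comap, Subgroup.closure_le]
    rintro _ ⟨x, y, rfl⟩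
    have h : centralHom φ (.ofAdd (φ x y)) = ⁅(⟨x, 0, 0⟩ : HeisenbergGroup φ), ⟨0, y, 0⟩⁆ := by
      simp [commutatorElement_eq]
    rw [SetLike.mem_coe, Subgroup.mem_comap, h]
    exact Subgroup.commutator_mem_commutator (Subgroup.mem_top _) (Subgroup.mem_top _)

theorem commutator_eq_range (hφ : ∀ z, ∃ x y, φ x y = z) :
    commutator (HeisenbergGroup φ) = (centralHom φ).range := by
  have h : {z : Multiplicative Z | ∃ x y, .ofAdd (φ x y) = z} = Set.univ :=
    Set.eq_univ_of_forall hφ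
  rw [commutator_eq_map_closure, h, Subgroup.closure_univ, MonoidHom.range_eq_map]

/-- The identification of the commutator subgroup with `Z` when every element of `Z` is a value of
the pairing. -/
noncomputable def commutatorEquiv (hφ : ∀ z, ∃ x y, φ x y = z) :
    commutator (HeisenbergGroup φ) ≃* Multiplicative Z :=
  (MulEquiv.subgroupCongr (commutator_eq_range hφ)).trans
    (MonoidHom.ofInjective centralHom_injective).symm

end HeisenbergGroup

section Evaluation

/-- The elements of `M` killed by a power of `p`: for `p` prime, the `p`-primary component. -/
abbrev powTorsion (p : ℕ) (M : Type*) [AddCommGroup M] : Submodule ℤ M :=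
  Submodule.torsion' ℤ M (Submonoid.powers p)

theorem mem_powTorsion {p : ℕ} {M : Type*} [AddCommGroup M] {x : M} :
    x ∈ powTorsion p M ↔ ∃ k, p ^ k • x = 0 := by
  simp [powTorsion, Submodule.mem_torsion'_iff, Submonoid.mem_powers_iff, Submonoid.smul_def]

theorem isPGroup_powTorsion (p : ℕ) (M : Type*) [AddCommGroup M] :
    IsPGroup p (Multiplicative (powTorsion p M)) := by
  intro x
  obtain ⟨k, hk⟩ := mem_powTorsion.mp x.toAdd.2
  exact ⟨k, Multiplicative.toAdd.injective (Subtype.ext hk)⟩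

variable (p : ℕ) (Z : Type*) [AddCommGroup Z]

/-- The `p`-power torsion of `∏ z : Z, ⟨z⟩`. The factors are cyclic, rather than copies of `Z`, so
that each projection has finite order as soon as `z` does. -/
abbrev CyclicProduct : Type _ :=
  powTorsion p (∀ z : Z, AddSubgroup.zmultiples z)

/-- The `p`-power torsion homomorphisms from `CyclicProduct p Z` to `Z`. -/
abbrev CyclicProductDual : Type _ :=
  powTorsion p (CyclicProduct p Z →+ Z)

instance [Finite Z] : Finite (CyclicProductDual p Z) :=
  have : Finite (CyclicProduct p Z →+ Z) := DFunLike.finite _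
  Subtype.finite

/-- The pairing `(x, f) ↦ f x`. -/
def evalPairing : CyclicProduct p Z →+ CyclicProductDual p Z →+ Z :=
  (Submodule.subtype _).toAddMonoidHom.flip

variable {p Z}

/-- The projection `CyclicProduct p Z → ⟨z⟩ ⊆ Z`. -/
def cyclicProj (z : Z) : CyclicProduct p Z →+ Z :=
  (AddSubgroup.zmultiples z).subtype.comp
    ((Pi.evalAddMonoidHom (fun w : Z ↦ AddSubgroup.zmultiples w) z).comp
      (Submodule.subtype _).toAddMonoidHom)

theorem nsmul_cyclicProj {n : ℕ} {z : Z} (hz : n • z = 0) :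
    n • (cyclicProj z : CyclicProduct p Z →+ Z) = 0 := by
  ext x
  obtain ⟨m, hm⟩ := AddSubgroup.mem_zmultiples_iff.mp (x.1 z).2
  change n • (x.1 z : Z) = 0
  rw [← hm, smul_comm, hz, smul_zero]

theorem exists_evalPairing_eq {z : Z} (hz : z ∈ powTorsion p Z) :
    ∃ x f, evalPairing p Z x f = z := by
  classical
  obtain ⟨k, hk⟩ := mem_powTorsion.mp hz
  let generator : ∀ w : Z, AddSubgroup.zmultiples w :=
    Pi.single z ⟨z, AddSubgroup.mem_zmultiples z⟩
  have generator_mem : generator ∈ powTorsion p (∀ w : Z, AddSubgroup.zmultiples w) :=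
    mem_powTorsion.mpr ⟨k, by
      rw [← Pi.single_smul, Pi.single_eq_zero_iff]
      exact Subtype.ext hk⟩
  refine ⟨⟨generator, generator_mem⟩,
    ⟨cyclicProj z, mem_powTorsion.mpr ⟨k, nsmul_cyclicProj hk⟩⟩, ?_⟩
  change (generator z : Z) = z
  simp [generator]

end Evaluation

theorem exists_pGroup_commutator_mulEquiv_general
    (p : ℕ) (A : Type u) [CommGroup A] (hA : IsPGroup p A) :
    ∃ (B : Type u) (_ : Group B),
      IsPGroup p B ∧ (Finite A → Finite B) ∧ Nonempty (↥(commutator B) ≃* A) := by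
  let φ := evalPairing p (Additive A)
  have hφ (a : Additive A) : ∃ x f, φ x f = a :=
    exists_evalPairing_eq (mem_powTorsion.mpr (hA a.toMul))
  have hB : IsPGroup p (HeisenbergGroup φ) :=
    HeisenbergGroup.isPGroup (isPGroup_powTorsion p _) (isPGroup_powTorsion p _)
      (hA.of_equiv (MulEquiv.multiplicativeAdditive A).symm)
  exact ⟨HeisenbergGroup φ, inferInstance, hB, fun _ ↦ inferInstance,
    ⟨(HeisenbergGroup.commutatorEquiv hφ).trans (MulEquiv.multiplicativeAdditive A)⟩⟩

/-- For every prime `p` and every finite abelian `p`-group `A`, there is a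
finite `p`-group `B` whose commutator subgroup `[B,B]` is isomorphic to `A`. -/
theorem exists_pGroup_commutator_mulEquiv
    (p : ℕ) (hp : p.Prime) (A : Type) [CommGroup A] [Finite A] (hA : IsPGroup p A) :
    ∃ (B : Type) (_ : Group B) (_ : Finite B),
      IsPGroup p B ∧ Nonempty (↥(commutator B) ≃* A) := by
  obtain ⟨B, _, hB, hfinite, hcomm⟩ := exists_pGroup_commutator_mulEquiv_general p A hA
  exact ⟨B, _, hfinite inferInstance, hB, hcomm⟩
end

section
/- Let k be a field of characteristic p > 0 and n ≥ 1. Then the polynomial f(u) = u^{p^n} − u − y^{p^n+1}, viewed as a polynomial in u over the rational function field k(y), is irreducible; equivalently, u^{p^n} − u − y^{p^n+1} is irreducible as an element of the polynomial ring k[y,u]. -/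
/-!
Give `y` weight `m` and `u` weight `n` with `m`, `n` coprime, by substituting `y = t ^ m` and
`u = t ^ n`. Distinct monomials of `u`-degree less than `m` have distinct weights, so nothing
cancels when a polynomial `A(y, u)` with `deg_u A < m` is specialised, and the image has degree at
least `m * deg A(y, 0)`. If `f` is monic in `u` of degree `m` and factors properly as `A * B`, the
image of `f` therefore has degree at least `m * deg f(y, 0)`. For `f = u ^ m - u - y ^ n` the two
terms of top weight cancel: the image is `-t ^ n`, of degree only `n < m * n`.
-/

section

open Polynomial

/-- The substitution `y = t ^ m`, `u = t ^ n` from `R[y][u]` to `R[t]`; the degree of the image is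
the degree for the weights `m` of `y` and `n` of `u`, unless leading terms cancel. -/
noncomputable def weightedSubst {R : Type*} [CommSemiring R] (m n : ℕ) : R[X][X] →+* R[X] :=
  eval₂RingHom (expand R m : R[X] →+* R[X]) (X ^ n)

section CommSemiring

variable {R : Type*} [CommSemiring R] {m n : ℕ} {A : R[X][X]}

theorem weightedSubst_X : weightedSubst m n (X : R[X][X]) = X ^ n :=
  eval₂_X _ _

theorem weightedSubst_C (a : R[X]) : weightedSubst m n (C a) = expand R m a :=
  eval₂_C _ _

theorem coeff_expand_mul_X_pow_of_not_modEq {d e : ℕ} (hm : 0 < m) (a : R[X])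
    (hde : ¬ d ≡ e [MOD m]) : (expand R m a * X ^ d).coeff e = 0 := by
  rw [coeff_mul_X_pow']
  split_ifs with hle
  · rw [coeff_expand hm, if_neg fun hdvd => hde ((Nat.modEq_iff_dvd' hle).2 hdvd)]
  · rfl

theorem coeff_weightedSubst (hmn : m.Coprime n) (hA : A.natDegree < m) (i : ℕ) {j : ℕ}
    (hj : j < m) : (weightedSubst m n A).coeff (m * i + n * j) = (A.coeff j).coeff i := by
  have hm : 0 < m := Nat.zero_lt_of_lt hA
  rw [weightedSubst, coe_eval₂RingHom, eval₂_eq_sum_range' _ hA, finsetSum_coeff,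
    Finset.sum_eq_single_of_mem j (Finset.mem_range.2 hj)]
  · rw [← pow_mul, coeff_mul_X_pow, RingHom.coe_coe, coeff_expand_mul' hm]
  · intro l hl hlj
    rw [← pow_mul, RingHom.coe_coe]
    refine coeff_expand_mul_X_pow_of_not_modEq hm _ fun hmod => hlj ?_
    have hweights : n * l ≡ n * j [MOD m] := by
      simpa only [Nat.ModEq, Nat.mul_add_mod] using hmod
    exact (Nat.ModEq.cancel_left_of_coprime hmn hweights).eq_of_lt_of_lt (Finset.mem_range.1 hl) hj

theorem weightedSubst_ne_zero (hmn : m.Coprime n) (hA : A.natDegree < m) (hA0 : A ≠ 0) :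
    weightedSubst m n A ≠ 0 := by
  intro h
  have hcoeff := coeff_weightedSubst hmn hA A.leadingCoeff.natDegree hA
  rw [h, coeff_zero, coeff_natDegree, coeff_natDegree] at hcoeff
  exact hA0 (leadingCoeff_eq_zero.1 (leadingCoeff_eq_zero.1 hcoeff.symm))

theorem mul_natDegree_coeff_zero_le_natDegree_weightedSubst (hmn : m.Coprime n)
    (hA : A.natDegree < m) :
    m * (A.coeff 0).natDegree ≤ (weightedSubst m n A).natDegree := by
  rcases eq_or_ne (A.coeff 0) 0 with h0 | h0
  · simp only [h0, natDegree_zero, mul_zero, zero_le]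
  · apply le_natDegree_of_ne_zero
    have hcoeff := coeff_weightedSubst hmn hA (A.coeff 0).natDegree (Nat.zero_lt_of_lt hA)
    rw [mul_zero, add_zero] at hcoeff
    rwa [hcoeff, coeff_natDegree, leadingCoeff_ne_zero]

end CommSemiring

theorem irreducible_of_natDegree_weightedSubst_lt {R : Type*} [CommRing R] [NoZeroDivisors R]
    {f : R[X][X]} {n : ℕ} (hf : f.Monic) (hn : f.natDegree.Coprime n)
    (hlt : (weightedSubst f.natDegree n f).natDegree < f.natDegree * (f.coeff 0).natDegree) :
    Irreducible f := by
  refine hf.irreducible_iff_natDegree.2 ⟨?_, fun A B hA hB hAB => ?_⟩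
  · rintro rfl
    simp only [natDegree_one, zero_mul, not_lt_zero] at hlt
  by_contra! hdeg
  have hsum : A.natDegree + B.natDegree = f.natDegree := by rw [← hA.natDegree_mul hB, hAB]
  have hAlt : A.natDegree < f.natDegree := by lia
  have hBlt : B.natDegree < f.natDegree := by lia
  have hA0 : A ≠ 0 := fun h => hdeg.1 (by rw [h, natDegree_zero])
  have hB0 : B ≠ 0 := fun h => hdeg.2 (by rw [h, natDegree_zero])
  refine hlt.not_ge ?_
  calc f.natDegree * (f.coeff 0).natDegree
      ≤ f.natDegree * ((A.coeff 0).natDegree + (B.coeff 0).natDegree) := by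
        rw [← hAB, mul_coeff_zero]
        exact Nat.mul_le_mul_left _ natDegree_mul_le
    _ ≤ (weightedSubst f.natDegree n A).natDegree + (weightedSubst f.natDegree n B).natDegree := by
        rw [mul_add]
        exact add_le_add (mul_natDegree_coeff_zero_le_natDegree_weightedSubst hn hAlt)
          (mul_natDegree_coeff_zero_le_natDegree_weightedSubst hn hBlt)
    _ = (weightedSubst f.natDegree n f).natDegree := by
        rw [← natDegree_mul (weightedSubst_ne_zero hn hAlt hA0)
          (weightedSubst_ne_zero hn hBlt hB0), ← map_mul, hAB]

theorem monic_X_pow_sub_X_sub_C {R : Type*} [Ring R] {m : ℕ} (hm : 1 < m) (a : R) :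
    (X ^ m - X - C a : R[X]).Monic := by
  nontriviality R
  rw [sub_sub]
  exact monic_X_pow_sub (by rw [degree_X_add_C]; exact_mod_cast hm)

theorem natDegree_X_pow_sub_X_sub_C {R : Type*} [Ring R] [Nontrivial R] {m : ℕ} (hm : 1 < m)
    (a : R) : (X ^ m - X - C a : R[X]).natDegree = m := by
  rw [natDegree_sub_C, natDegree_sub_eq_left_of_natDegree_lt] <;>
    simp only [natDegree_X_pow, natDegree_X, hm]

theorem weightedSubst_X_pow_sub_X_sub_C_X_pow {R : Type*} [CommRing R] (m n : ℕ) :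
    weightedSubst m n (X ^ m - X - C (X ^ n) : R[X][X]) = -X ^ n := by
  rw [map_sub, map_sub, map_pow, weightedSubst_X, weightedSubst_C, map_pow, expand_X]
  ring

theorem irreducible_X_pow_sub_X_sub_C_X_pow {R : Type*} [CommRing R] [IsDomain R] {m n : ℕ}
    (hm : 1 < m) (hmn : m.Coprime n) : Irreducible (X ^ m - X - C (X ^ n) : R[X][X]) := by
  have hdeg := natDegree_X_pow_sub_X_sub_C hm (X ^ n : R[X])
  have hcoeff : (X ^ m - X - C (X ^ n) : R[X][X]).coeff 0 = -X ^ n := by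
    simp only [coeff_sub, coeff_X_pow, coeff_X_zero, coeff_C_zero, (zero_lt_one.trans hm).ne,
      if_false, sub_zero, zero_sub]
  have hn : 0 < n := Nat.pos_of_ne_zero fun h => hm.ne' (by rwa [h, Nat.coprime_zero_right] at hmn)
  refine irreducible_of_natDegree_weightedSubst_lt (monic_X_pow_sub_X_sub_C hm _)
    (hdeg.symm ▸ hmn) ?_
  rw [hdeg, hcoeff, weightedSubst_X_pow_sub_X_sub_C_X_pow, natDegree_neg, natDegree_X_pow]
  exact lt_mul_of_one_lt_left hn hm

theorem artinSchreier_poly_irreducible_general {R : Type*} [CommRing R] [IsDomain R]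
    [IsIntegrallyClosed R] {m n : ℕ} (hm : 1 < m) (hmn : m.Coprime n) :
    Irreducible (X ^ m - X - C (RatFunc.X ^ n) : (RatFunc R)[X]) ∧
      Irreducible (X ^ m - X - C (X ^ n) : R[X][X]) := by
  have hirr := irreducible_X_pow_sub_X_sub_C_X_pow (R := R) hm hmn
  have hgauss := (monic_X_pow_sub_X_sub_C hm _).irreducible_iff_irreducible_map_fraction_map
    (K := RatFunc R) |>.1 hirr
  refine ⟨?_, hirr⟩
  simpa only [Polynomial.map_sub, Polynomial.map_pow, map_X, map_C, map_pow,
    RatFunc.algebraMap_X] using hgauss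

end

/-- Let `k` be a field of characteristic `p > 0` and `n ≥ 1`.  The
polynomial `f(u) = u^{p^n} - u - y^{p^n+1}`, viewed as a polynomial in `u` over the
rational function field `k(y)`, is irreducible; equivalently, `u^{p^n} - u - y^{p^n+1}`
is irreducible as an element of `k[y][u]`. -/
theorem artinSchreier_poly_irreducible
    (p : ℕ) [Fact p.Prime] (k : Type) [Field k] [CharP k p] (n : ℕ) (hn : 1 ≤ n) :
    Irreducible
      (Polynomial.X ^ (p ^ n) - Polynomial.X - Polynomial.C (RatFunc.X ^ (p ^ n + 1)) :
        Polynomial (RatFunc k)) ∧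
    Irreducible
      (Polynomial.X ^ (p ^ n) - Polynomial.X - Polynomial.C (Polynomial.X ^ (p ^ n + 1)) :
        Polynomial (Polynomial k)) :=
  artinSchreier_poly_irreducible_general
    (Nat.one_lt_pow (Nat.one_le_iff_ne_zero.1 hn) (Fact.out : p.Prime).one_lt) (by simp)
end
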